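/- Intermediate Values: Let K be a statistical ALC knowledge base and (C|D) a query such that some model I of K has [D]^I > 0. Let m be the infimum and M the supremum of [C ⊓ D]^I/[D]^I over all models I of K with [D]^I > 0. Then for every real x with m < x < M and every ε > 0, there exists a model I of K with [D]^I > 0 such that |[C ⊓ D]^I/[D]^I − x| < ε. -/

import Mathlib

open scoped Classical

/-- ALC concepts over concept names and role names (both drawn from ℕ,
regarded as disjoint name spaces). -/
inductive Cpt : Type where
  | top : Cpt
  | atom : ℕ → Cpt
  | neg : Cpt → Cpt
  | inter : Cpt → Cpt → Cpt
  | ex : ℕ → Cpt → Cpt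
deriving DecidableEq

/-- A finite interpretation with domain drawn from the type `α`. -/
structure Interp (α : Type) where
  dom : Finset α
  dom_nonempty : dom.Nonempty
  conc : ℕ → Finset α
  conc_sub : ∀ a, conc a ⊆ dom
  role : ℕ → Finset (α × α)
  role_sub : ∀ r, role r ⊆ dom ×ˢ dom

/-- The extension `C^I` of a concept. -/
noncomputable def Interp.ext {α : Type} (I : Interp α) : Cpt → Finset α
  | .top => I.dom
  | .atom a => I.conc a
  | .neg c => I.dom \ I.ext c
  | .inter c d => I.ext c ∩ I.ext d
  | .ex r c => I.dom.filter (fun d => ∃ e ∈ I.ext c, (d, e) ∈ I.role r)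

/-- `[C]^I`, the cardinality of the extension of `C`. -/
noncomputable def cardC {α : Type} (I : Interp α) (c : Cpt) : ℕ := (I.ext c).card

/-- A probabilistic conditional `(C|D)[l,u]`. -/
structure Cond : Type where
  C : Cpt
  D : Cpt
  l : ℚ
  u : ℚ
deriving DecidableEq

/-- `I ⊨ (C|D)[l,u]` iff `[D]^I = 0` or `l ≤ [C ⊓ D]^I/[D]^I ≤ u`. -/
def satCond {α : Type} (I : Interp α) (κ : Cond) : Prop :=
  cardC I κ.D = 0 ∨
    (κ.l ≤ (cardC I (.inter κ.C κ.D) : ℚ) / (cardC I κ.D : ℚ) ∧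
     (cardC I (.inter κ.C κ.D) : ℚ) / (cardC I κ.D : ℚ) ≤ κ.u)

/-- Finite interpretations (with domain drawn from the countable set ℕ). -/
abbrev FInterp := Interp ℕ

/-- The models of a knowledge base (finite set of conditionals). -/
def Models (K : Finset Cond) : Set FInterp := {I | ∀ κ ∈ K, satCond I κ}

/-- l-entailment: every model of `K` satisfies the conditional. -/
def entailsL (K : Finset Cond) (κ : Cond) : Prop := ∀ I ∈ Models K, satCond I κ

/-- The set of proportions `[C ⊓ D]^I/[D]^I` over models `I` of `K` with `[D]^I > 0`. -/
def ratioSet (K : Finset Cond) (C D : Cpt) : Set ℝ :=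
  {x | ∃ I ∈ Models K, 0 < cardC I D ∧
    x = (cardC I (.inter C D) : ℝ) / (cardC I D : ℝ)}

/-- Disjoint union of two finite sets of naturals, coded by parity. -/
noncomputable def djU (A B : Finset ℕ) : Finset ℕ :=
  A.image (fun n => 2 * n) ∪ B.image (fun n => 2 * n + 1)

theorem even_mem_djU (A B : Finset ℕ) (n : ℕ) : 2 * n ∈ djU A B ↔ n ∈ A := by
  simp only [djU, Finset.mem_union, Finset.mem_image]
  constructor
  · rintro (⟨a, ha, h⟩ | ⟨a, ha, h⟩)
    · have : a = n := by omega
      exact this ▸ ha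
    · omega
  · intro h
    exact Or.inl ⟨n, h, rfl⟩

theorem odd_mem_djU (A B : Finset ℕ) (n : ℕ) : 2 * n + 1 ∈ djU A B ↔ n ∈ B := by
  simp only [djU, Finset.mem_union, Finset.mem_image]
  constructor
  · rintro (⟨a, ha, h⟩ | ⟨a, ha, h⟩)
    · omega
    · have : a = n := by omega
      exact this ▸ ha
  · intro h
    exact Or.inr ⟨n, h, rfl⟩

theorem parity_cases (n : ℕ) : (∃ m, n = 2 * m) ∨ ∃ m, n = 2 * m + 1 := by
  rcases Nat.even_or_odd' n with ⟨m, h | h⟩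
  · exact Or.inl ⟨m, h⟩
  · exact Or.inr ⟨m, h⟩

theorem card_djU (A B : Finset ℕ) : (djU A B).card = A.card + B.card := by
  unfold djU
  rw [Finset.card_union_of_disjoint, Finset.card_image_of_injective,
    Finset.card_image_of_injective]
  · intro a b h
    simp only at h
    omega
  · intro a b h
    simp only at h
    omega
  · rw [Finset.disjoint_left]
    intro a h1 h2
    simp only [Finset.mem_image] at h1 h2
    obtain ⟨b, _, hb⟩ := h1
    obtain ⟨c, _, hc⟩ := h2
    omega

/-- Disjoint union of two interpretations. -/
noncomputable def dunion (I J : FInterp) : FInterp where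
  dom := djU I.dom J.dom
  dom_nonempty := by
    obtain ⟨n, hn⟩ := I.dom_nonempty
    exact ⟨2 * n, (even_mem_djU _ _ _).2 hn⟩
  conc a := djU (I.conc a) (J.conc a)
  conc_sub a := Finset.union_subset_union (Finset.image_subset_image (I.conc_sub a))
    (Finset.image_subset_image (J.conc_sub a))
  role r := (I.role r).image (fun p => (2 * p.1, 2 * p.2)) ∪
    (J.role r).image (fun p => (2 * p.1 + 1, 2 * p.2 + 1))
  role_sub r := by
    intro p hp
    simp only [Finset.mem_union, Finset.mem_image] at hp
    rcases hp with ⟨q, hq, rfl⟩ | ⟨q, hq, rfl⟩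
    · have := I.role_sub r hq
      simpa [even_mem_djU, odd_mem_djU] using this
    · have := J.role_sub r hq
      simpa [even_mem_djU, odd_mem_djU] using this

theorem role_dunion (I J : FInterp) (r a b : ℕ) : (a, b) ∈ (dunion I J).role r ↔
    (∃ a' b', (a', b') ∈ I.role r ∧ a = 2 * a' ∧ b = 2 * b') ∨
    (∃ a' b', (a', b') ∈ J.role r ∧ a = 2 * a' + 1 ∧ b = 2 * b' + 1) := by
  simp only [dunion, Finset.mem_union, Finset.mem_image, Prod.exists, Prod.mk.injEq]
  simp only [eq_comm]

theorem ext_dunion (I J : FInterp) (c : Cpt) :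
    (dunion I J).ext c = djU (I.ext c) (J.ext c) := by
  induction c with
  | top => rfl
  | atom a => rfl
  | neg c ih =>
    have hd : (dunion I J).dom = djU I.dom J.dom := rfl
    ext n
    rcases parity_cases n with ⟨m, rfl⟩ | ⟨m, rfl⟩ <;>
      simp [Interp.ext, ih, hd, even_mem_djU, odd_mem_djU]
  | inter c d ihc ihd =>
    ext n
    rcases parity_cases n with ⟨m, rfl⟩ | ⟨m, rfl⟩ <;>
      simp [Interp.ext, ihc, ihd, even_mem_djU, odd_mem_djU]
  | ex r c ih =>
    have hd : (dunion I J).dom = djU I.dom J.dom := rfl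
    ext n
    rcases parity_cases n with ⟨m, rfl⟩ | ⟨m, rfl⟩
    · simp only [Interp.ext, ih, hd, even_mem_djU, Finset.mem_filter, role_dunion]
      refine and_congr_right fun _ => ⟨?_, ?_⟩
      · rintro ⟨e, he, ⟨a, b, h, h1, rfl⟩ | ⟨a, b, h, h1, rfl⟩⟩
        · have : m = a := by omega
          subst this
          exact ⟨b, (even_mem_djU _ _ _).1 he, h⟩
        · omega
      · rintro ⟨e, he, h⟩
        exact ⟨2 * e, (even_mem_djU _ _ _).2 he, Or.inl ⟨m, e, h, rfl, rfl⟩⟩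
    · simp only [Interp.ext, ih, hd, odd_mem_djU, Finset.mem_filter, role_dunion]
      refine and_congr_right fun _ => ⟨?_, ?_⟩
      · rintro ⟨e, he, ⟨a, b, h, h1, rfl⟩ | ⟨a, b, h, h1, rfl⟩⟩
        · omega
        · have : m = a := by omega
          subst this
          exact ⟨b, (odd_mem_djU _ _ _).1 he, h⟩
      · rintro ⟨e, he, h⟩
        exact ⟨2 * e + 1, (odd_mem_djU _ _ _).2 he, Or.inr ⟨m, e, h, rfl, rfl⟩⟩

theorem cardC_dunion (I J : FInterp) (c : Cpt) :
    cardC (dunion I J) c = cardC I c + cardC J c := by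
  simp only [cardC, ext_dunion, card_djU]

theorem satCond_iff (I : FInterp) (κ : Cond) : satCond I κ ↔
    κ.l * (cardC I κ.D : ℚ) ≤ (cardC I (.inter κ.C κ.D) : ℚ) ∧
    (cardC I (.inter κ.C κ.D) : ℚ) ≤ κ.u * (cardC I κ.D : ℚ) := by
  unfold satCond
  rcases Nat.eq_zero_or_pos (cardC I κ.D) with h | h
  · have h2 : cardC I (.inter κ.C κ.D) = 0 := by
      have : cardC I (.inter κ.C κ.D) ≤ cardC I κ.D :=
        by
        unfold cardC
        refine Finset.card_le_card fun a ha => ?_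
        simp only [Interp.ext, Finset.mem_inter] at ha
        exact ha.2
      omega
    simp [h, h2]
  · have h' : (0 : ℚ) < cardC I κ.D := by exact_mod_cast h
    rw [le_div_iff₀ h', div_le_iff₀ h']
    constructor
    · rintro (h0 | h0)
      · omega
      · exact h0
    · exact Or.inr

theorem dunion_mem (K : Finset Cond) (I J : FInterp) (hI : I ∈ Models K) (hJ : J ∈ Models K) :
    dunion I J ∈ Models K := by
  intro κ hκ
  have h1 := (satCond_iff _ _).1 (hI κ hκ)
  have h2 := (satCond_iff _ _).1 (hJ κ hκ)
  rw [satCond_iff]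
  simp only [cardC_dunion]
  push_cast
  constructor <;> linarith [h1.1, h1.2, h2.1, h2.2]

/-- `p + 1` copies of `I` and `q` copies of `J`. -/
theorem exists_copies (K : Finset Cond) (I J : FInterp) (hI : I ∈ Models K) (hJ : J ∈ Models K)
    (p q : ℕ) : ∃ L ∈ Models K, ∀ c, cardC L c = (p + 1) * cardC I c + q * cardC J c := by
  induction p with
  | zero =>
    induction q with
    | zero => exact ⟨I, hI, by simp⟩
    | succ q ih =>
      obtain ⟨L, hL, h⟩ := ih
      exact ⟨dunion L J, dunion_mem K L J hL hJ, fun c => by rw [cardC_dunion, h]; ring⟩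
  | succ p ih =>
    obtain ⟨L, hL, h⟩ := ih
    exact ⟨dunion L I, dunion_mem K L I hL hI, fun c => by rw [cardC_dunion, h]; ring⟩

/-- Intermediate Values. -/
theorem intermediate_values (K : Finset Cond) (C D : Cpt)
    (hex : ∃ I ∈ Models K, 0 < cardC I D)
    (x : ℝ) (hx1 : sInf (ratioSet K C D) < x) (hx2 : x < sSup (ratioSet K C D))
    (ε : ℝ) (hε : 0 < ε) :
    ∃ I ∈ Models K, 0 < cardC I D ∧
      |(cardC I (.inter C D) : ℝ) / (cardC I D : ℝ) - x| < ε := by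
  have hne : (ratioSet K C D).Nonempty := by
    obtain ⟨I, hI, h⟩ := hex
    exact ⟨_, I, hI, h, rfl⟩
  obtain ⟨_, ⟨I, hI, hID, rfl⟩, h1⟩ := exists_lt_of_csInf_lt hne hx1
  obtain ⟨_, ⟨J, hJ, hJD, rfl⟩, h2⟩ := exists_lt_of_lt_csSup hne hx2
  have hb0 : (0 : ℝ) < cardC I D := by exact_mod_cast hID
  have hb1 : (0 : ℝ) < cardC J D := by exact_mod_cast hJD
  rw [div_lt_iff₀ hb0] at h1
  rw [lt_div_iff₀ hb1] at h2
  obtain ⟨u, hu⟩ : ∃ u : ℝ, u = x * cardC I D - cardC I (.inter C D) := ⟨_, rfl⟩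
  obtain ⟨v, hv⟩ : ∃ v : ℝ, v = cardC J (.inter C D) - x * cardC J D := ⟨_, rfl⟩
  have hu0 : 0 < u := by linarith
  have hv0 : 0 < v := by linarith
  obtain ⟨p, hp⟩ := exists_nat_gt (v / (ε * cardC I D))
  rw [div_lt_iff₀ (by positivity)] at hp
  have hq1 := Nat.floor_le (a := ((p : ℝ) + 1) * u / v) (by positivity)
  have hq2 := Nat.lt_floor_add_one (((p : ℝ) + 1) * u / v)
  obtain ⟨q, hq⟩ : ∃ q : ℕ, q = ⌊((p : ℝ) + 1) * u / v⌋₊ := ⟨_, rfl⟩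
  rw [← hq] at hq1 hq2
  rw [le_div_iff₀ hv0] at hq1
  rw [div_lt_iff₀ hv0] at hq2
  obtain ⟨L, hL, hc⟩ := exists_copies K I J hI hJ p q
  have hpos : 0 < cardC L D := by
    rw [hc]
    positivity
  have hposR : (0 : ℝ) < cardC L D := by exact_mod_cast hpos
  refine ⟨L, hL, hpos, ?_⟩
  have hD : (cardC L D : ℝ) = (p + 1) * cardC I D + q * cardC J D := by
    rw [hc]
    push_cast
    ring
  have hCD : (cardC L (.inter C D) : ℝ) =
      (p + 1) * cardC I (.inter C D) + q * cardC J (.inter C D) := by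
    rw [hc]
    push_cast
    ring
  have key : (cardC L (.inter C D) : ℝ) - x * cardC L D = q * v - (p + 1) * u := by
    rw [hD, hCD, hu, hv]
    ring
  have hbig : v < ε * cardC L D := by
    rw [hD]
    have : 0 ≤ ε * (q * cardC J D : ℝ) := by positivity
    have : 0 < ε * (cardC I D : ℝ) := by positivity
    nlinarith
  have e : (cardC L (.inter C D) : ℝ) / cardC L D - x
      = ((q : ℝ) * v - (p + 1) * u) / cardC L D := by
    rw [← key]
    field_simp
  rw [e, abs_div, abs_of_pos hposR, div_lt_iff₀ hposR, abs_lt]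
  constructor <;> nlinarith
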